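/- arXiv:1902.05708 — 3 statements merged into one kernel-verified Lean document; each statement's English description precedes it below -/
import Mathlib

section
/- (Clearing.) Let K be a field, D¹ an m×n matrix and D² an n×p matrix over K with D¹·D² = 0. Let U² be a p×p unipotent upper triangular matrix over K such that R² := D²·U² is reduced, and suppose the j-th column of R² is nonzero with pivot i. Then the i-th column of D¹ lies in the span of the columns 1,…,i−1 of D¹; consequently, for every n×n unipotent upper triangular matrix U¹ over K such that R¹ := D¹·U¹ is reduced, the i-th column of R¹ is zero. -/
/-!
Column `j` of `R² = D² U²` is a vector `c` with pivot `i` in the kernel of `D¹`. Solving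
`D¹ c = 0` for the `i`-th column of `D¹` gives the span claim. For the second claim, put
`w = (U¹)⁻¹ c`, so that `R¹ w = 0`. Multiplication by a unipotent upper triangular matrix
preserves pivots, hence `w i ≠ 0`. In a linear relation among the columns of a reduced matrix,
the largest pivot among the nonzero columns involved cannot cancel, so every column with
nonzero coefficient vanishes (`Reduced.col_eq_zero`).
-/

/-- `i` is the pivot of `v`: the largest index at which `v` is nonzero. -/
def IsPivot {K : Type*} [Field K] {m : ℕ} (v : Fin m → K) (i : Fin m) : Prop :=
  v i ≠ 0 ∧ ∀ k, v k ≠ 0 → k ≤ i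

/-- A matrix is reduced if any two distinct nonzero columns have distinct pivots. -/
def Reduced {K : Type*} [Field K] {m n : ℕ} (R : Matrix (Fin m) (Fin n) K) : Prop :=
  ∀ (j k : Fin n) (i : Fin m), j ≠ k →
    IsPivot (fun r => R r j) i → ¬ IsPivot (fun r => R r k) i

/-- An `n × n` matrix is unipotent upper triangular if its entries below the diagonal
vanish and its diagonal entries all equal `1`. -/
def UnipotentUpper {K : Type*} [Field K] {n : ℕ} (U : Matrix (Fin n) (Fin n) K) : Prop :=
  (∀ i j : Fin n, j < i → U i j = 0) ∧ ∀ i, U i i = 1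

theorem exists_isPivot {K : Type*} [Field K] {m : ℕ} {v : Fin m → K} (hv : v ≠ 0) :
    ∃ i, IsPivot v i := by
  classical
  obtain ⟨a, ha⟩ := Function.ne_iff.mp hv
  obtain ⟨i, hi, hmax⟩ := (Finset.univ.filter fun k => v k ≠ 0).exists_max_image id
    ⟨a, by simpa using ha⟩
  exact ⟨i, by simpa using hi, fun k hk => hmax k (by simpa using hk)⟩

/-- The nonzero columns of a reduced matrix are linearly independent, in coordinates: a column
occurring with nonzero coefficient in a linear relation is zero. -/
theorem Reduced.col_eq_zero {K : Type*} [Field K] {m n : ℕ} {R : Matrix (Fin m) (Fin n) K}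
    (hR : Reduced R) {w : Fin n → K} (hw : R.mulVec w = 0) {i : Fin n} (hi : w i ≠ 0) :
    (fun r => R r i) = 0 := by
  classical
  by_contra hne
  obtain ⟨r₀, hr₀⟩ := exists_isPivot hne
  -- Choose the column with the largest pivot among those with nonzero coefficient.
  obtain ⟨⟨k, r⟩, hkr, hmax⟩ := (Finset.univ.filter fun q : Fin n × Fin m =>
    w q.1 ≠ 0 ∧ IsPivot (fun r => R r q.1) q.2).exists_max_image Prod.snd
    ⟨(i, r₀), by simpa using ⟨hi, hr₀⟩⟩
  obtain ⟨hk, hpiv⟩ : w k ≠ 0 ∧ IsPivot (fun r => R r k) r := by simpa using hkr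
  have hsum : ∑ l, R r l * w l = 0 := congrFun hw r
  rw [Finset.sum_eq_single k] at hsum
  · exact mul_ne_zero hpiv.1 hk hsum
  · intro l _ hlk
    by_contra hl
    have hRl : R r l ≠ 0 := left_ne_zero_of_mul hl
    obtain ⟨s, hs⟩ := exists_isPivot (v := fun r => R r l) (fun h => hRl (congrFun h r))
    have hsr : s ≤ r := hmax (l, s) (by simpa using ⟨right_ne_zero_of_mul hl, hs⟩)
    obtain rfl : s = r := le_antisymm hsr (hs.2 r hRl)
    exact hR l k s hlk hs hpiv
  · simp

theorem UnipotentUpper.isPivot_mulVec {K : Type*} [Field K] {n : ℕ}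
    {U : Matrix (Fin n) (Fin n) K} (hU : UnipotentUpper U) {w : Fin n → K} {t : Fin n}
    (hw : IsPivot w t) : IsPivot (U.mulVec w) t := by
  constructor
  · have h : U.mulVec w t = w t := by
      change ∑ l, U t l * w l = w t
      rw [Finset.sum_eq_single t]
      · rw [hU.2, one_mul]
      · intro l _ hl
        rcases lt_or_gt_of_ne hl with h | h
        · rw [hU.1 t l h, zero_mul]
        · rw [by_contra fun h' => absurd (hw.2 l h') (not_le.mpr h), mul_zero]
      · simp
    rw [h]
    exact hw.1
  · intro k hk
    by_contra hkt
    push Not at hkt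
    apply hk
    change ∑ l, U k l * w l = 0
    refine Finset.sum_eq_zero fun l _ => ?_
    rcases lt_or_ge l k with h | h
    · rw [hU.1 k l h, zero_mul]
    · rw [by_contra fun h' => absurd (hw.2 l h') (not_le.mpr (hkt.trans_le h)), mul_zero]

theorem UnipotentUpper.isUnit_det {K : Type*} [Field K] {n : ℕ}
    {U : Matrix (Fin n) (Fin n) K} (hU : UnipotentUpper U) : IsUnit U.det := by
  rw [Matrix.det_of_isUpperTriangular (fun i j h => hU.1 i j h)]
  simp [hU.2]

/-- Clearing: if `D¹ · D² = 0`, `R² = D² · U²` is reduced, and the `j`-th column of `R²`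
is nonzero with pivot `i`, then the `i`-th column of `D¹` is in the span of the earlier
columns of `D¹`; consequently in any reduced matrix `R¹ = D¹ · U¹` obtained from `D¹` by
left-to-right column additions, the `i`-th column is zero. -/
theorem clearing {K : Type*} [Field K] {m n p : ℕ}
    (D1 : Matrix (Fin m) (Fin n) K) (D2 : Matrix (Fin n) (Fin p) K)
    (h0 : D1 * D2 = 0)
    (U2 : Matrix (Fin p) (Fin p) K) (hU2 : UnipotentUpper U2)
    (hR2 : Reduced (D2 * U2))
    (j : Fin p) (i : Fin n) (hpiv : IsPivot (fun r => (D2 * U2) r j) i) :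
    ((fun r => D1 r i) ∈
        Submodule.span K {v : Fin m → K | ∃ k : Fin n, k < i ∧ v = fun r => D1 r k}) ∧
    ∀ U1 : Matrix (Fin n) (Fin n) K, UnipotentUpper U1 → Reduced (D1 * U1) →
      (fun r => (D1 * U1) r i) = 0 := by
  set c : Fin n → K := fun r => (D2 * U2) r j with hc
  have hDc : D1.mulVec c = 0 := by
    have h : D1 * (D2 * U2) = 0 := by rw [← Matrix.mul_assoc, h0, Matrix.zero_mul]
    funext r
    exact congrFun (congrFun h r) j
  constructor
  · -- `c i • D1(*, i) = - ∑_{k < i} c k • D1(*, k)`, as `c` vanishes beyond `i`.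
    have hrel : ∑ k, c k • (fun r => D1 r k) = (0 : Fin m → K) := by
      funext r
      rw [← hDc]
      simp [Matrix.mulVec, dotProduct, mul_comm]
    rw [← Finset.add_sum_erase _ _ (Finset.mem_univ i)] at hrel
    rw [← Submodule.smul_mem_iff _ hpiv.1, eq_neg_of_add_eq_zero_left hrel]
    refine Submodule.neg_mem _ (Submodule.sum_mem _ fun k hk => ?_)
    by_cases hck : c k = 0
    · rw [hck, zero_smul]
      exact Submodule.zero_mem _
    · exact Submodule.smul_mem _ _ (Submodule.subset_span
        ⟨k, lt_of_le_of_ne (hpiv.2 k hck) (Finset.ne_of_mem_erase hk), rfl⟩)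
  · intro U1 hU1 hR1
    set w : Fin n → K := U1⁻¹.mulVec c
    have hUw : U1.mulVec w = c := by
      rw [Matrix.mulVec_mulVec, Matrix.mul_nonsing_inv _ hU1.isUnit_det, Matrix.one_mulVec]
    have hw : w ≠ 0 := by
      intro h
      rw [h, Matrix.mulVec_zero] at hUw
      exact hpiv.1 (congrFun hUw i).symm
    obtain ⟨t, ht⟩ := exists_isPivot hw
    have hct : IsPivot c t := hUw ▸ hU1.isPivot_mulVec ht
    obtain rfl : t = i := le_antisymm (hpiv.2 t hct.1) (hct.2 i hpiv.1)
    refine hR1.col_eq_zero (w := w) ?_ ht.1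
    rw [← Matrix.mulVec_mulVec, hUw, hDc]
end

section
/- Let K be a field, D an m×n matrix over K regarded as a linear map K^n → K^m, and g_1,…,g_n ∈ ℤ² column labels. Then there exist r ∈ ℕ and pairs (v_1,z_1),…,(v_r,z_r) ∈ K^n × ℤ² such that for every z ∈ ℤ², the family {v_l : z_l ≤ z} is linearly independent and spans ker D ∩ V_z. (In coordinates: the kernel of a morphism of finitely generated free 2-parameter persistence modules is free, and the algorithm KerBasis computes a basis for it.) -/
/-!
Write `V_z = A_{z₁} ∩ B_{z₂}`, where `A_s` (resp. `B_t`) is spanned by the `e_k` whose first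
(resp. second) label coordinate is at most `s` (resp. `t`). The theorem then follows from the
fact that any subspace `N` of a finite-dimensional space has a basis adapted to two filtrations
simultaneously (`exists_adapted_family`), applied to `N = ker D`.

The adapted basis is built by induction on `N ≠ 0`. Let `s` be the least index with `N ≤ A s`, and
let `H = N ∩ ker f` be a hyperplane of `N` containing `N ∩ A (s - 1)`. Let `t` be the least index
for which some `v ∈ N ∩ B t` lies outside `H`. Adding `v` with label `(s, t)` to an adapted basis of
`H` gives one of `N`: if `(s, t) ≤ z` fails, then `N ∩ A z₁ ∩ B z₂` lies in `H`; otherwise `v` lies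
in it and splits off.
-/

/-- Membership in a coordinate subspace is vanishing of the other coordinates. -/
lemma mem_span_single_iff {K : Type*} [Field K] {n : ℕ} (P : Fin n → Prop) (x : Fin n → K) :
    x ∈ Submodule.span K {w : Fin n → K | ∃ k : Fin n, P k ∧ w = Pi.single k 1} ↔
      ∀ k, ¬ P k → x k = 0 := by
  constructor
  · intro hx k hk
    induction hx using Submodule.span_induction with
    | mem w hw =>
      obtain ⟨j, hj, rfl⟩ := hw
      have hkj : k ≠ j := fun h => hk (h ▸ hj)
      simp [hkj]
    | zero => rfl
    | add a b _ _ ha hb => simp [ha, hb]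
    | smul c a _ ha => simp [ha]
  · intro h
    rw [pi_eq_sum_univ' x]
    refine Submodule.sum_mem _ fun k _ => ?_
    by_cases hk : P k
    · exact Submodule.smul_mem _ _ (Submodule.subset_span ⟨k, hk, by
        ext j; simp [Pi.single_apply, eq_comm]⟩)
    · rw [h k hk, zero_smul]
      exact Submodule.zero_mem _

/-- Every subspace `N` has a basis adapted to two bounded filtrations `A` and `B` at once. -/
lemma exists_adapted_family {K V : Type*} [Field K] [AddCommGroup V] [Module K V]
    [FiniteDimensional K V] (A B : ℤ → Submodule K V) (hA : Monotone A) (hB : Monotone B)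
    (hA0 : ∃ s, A s = ⊥) (hA1 : ∃ s, A s = ⊤) (hB0 : ∃ s, B s = ⊥) (hB1 : ∃ s, B s = ⊤)
    (N : Submodule K V) :
    ∃ (r : ℕ) (v : Fin r → V) (zl : Fin r → ℤ × ℤ), LinearIndependent K v ∧
      ∀ z : ℤ × ℤ, Submodule.span K {w | ∃ l : Fin r, zl l ≤ z ∧ w = v l}
        = N ⊓ (A z.1 ⊓ B z.2) := by
  induction N using WellFoundedLT.induction with
  | ind N ih =>
  by_cases hN : N = ⊥
  · subst hN
    exact ⟨0, Fin.elim0, Fin.elim0, linearIndependent_empty_type, fun z => by simp⟩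
  obtain ⟨a0, ha0⟩ := hA0
  obtain ⟨a1, ha1⟩ := hA1
  obtain ⟨b0, hb0⟩ := hB0
  obtain ⟨b1, hb1⟩ := hB1
  obtain ⟨s, hs, hsmin⟩ := Int.exists_least_of_bdd (P := fun s => N ≤ A s)
    ⟨a0, fun s hs => by
      by_contra! hlt
      exact hN (le_bot_iff.1 (ha0 ▸ hs.trans (hA hlt.le)))⟩ ⟨a1, by simp [ha1]⟩
  have hs' : ¬ N ≤ A (s - 1) := fun h => by have := hsmin _ h; omega
  obtain ⟨x, hxN, hxA⟩ := SetLike.not_le_iff_exists.1 hs'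
  obtain ⟨f, hfx, hf⟩ := Submodule.exists_le_ker_of_notMem hxA
  obtain ⟨t, ⟨v, hvN, hvB, hfv⟩, htmin⟩ := Int.exists_least_of_bdd
    (P := fun t => ∃ v, v ∈ N ∧ v ∈ B t ∧ f v ≠ 0)
    ⟨b0, fun t ⟨v, _, hv, hfv⟩ => by
      by_contra! hlt
      have : v ∈ B b0 := hB hlt.le hv
      rw [hb0, Submodule.mem_bot] at this
      exact hfv (by simp [this])⟩ ⟨b1, x, hxN, by simp [hb1], hfx⟩
  obtain ⟨r, u, zl, hu, hz⟩ := ih (N ⊓ LinearMap.ker f)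
    (lt_of_le_of_ne inf_le_left fun h => hfx (by
      rw [← h] at hxN
      exact hxN.2))
  refine ⟨r + 1, Fin.cons v u, Fin.cons (s, t) zl, ?_, fun z => ?_⟩
  · rw [linearIndependent_finCons]
    refine ⟨hu, fun hv => hfv ?_⟩
    have hle : Submodule.span K (Set.range u) ≤ LinearMap.ker f := by
      rw [Submodule.span_le]
      rintro _ ⟨l, rfl⟩
      have : u l ∈ Submodule.span K {w | ∃ l' : Fin r, zl l' ≤ zl l ∧ w = u l'} :=
        Submodule.subset_span ⟨l, le_rfl, rfl⟩
      rw [hz] at this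
      exact this.1.2
    exact hle hv
  · have hsub : N ⊓ LinearMap.ker f ⊓ (A z.1 ⊓ B z.2) ≤ Submodule.span K
        {w | ∃ l : Fin (r + 1), (Fin.cons (s, t) zl : Fin (r + 1) → ℤ × ℤ) l ≤ z ∧
          w = (Fin.cons v u : Fin (r + 1) → V) l} := by
      rw [← hz]
      refine Submodule.span_mono ?_
      rintro _ ⟨l, hl, rfl⟩
      exact ⟨l.succ, by simpa using hl, by simp⟩
    apply le_antisymm
    · rw [Submodule.span_le]
      rintro _ ⟨l, hl, rfl⟩
      induction l using Fin.cases with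
      | zero =>
        simp only [Fin.cons_zero] at hl ⊢
        exact ⟨hvN, hA hl.1 (hs hvN), hB hl.2 hvB⟩
      | succ l =>
        simp only [Fin.cons_succ] at hl ⊢
        have : u l ∈ Submodule.span K {w | ∃ l' : Fin r, zl l' ≤ z ∧ w = u l'} :=
          Submodule.subset_span ⟨l, hl, rfl⟩
        rw [hz] at this
        exact ⟨this.1.1, this.2⟩
    · rintro w ⟨hwN, hwA, hwB⟩
      by_cases hfw : f w = 0
      · exact hsub ⟨⟨hwN, hfw⟩, hwA, hwB⟩
      -- `f w ≠ 0` forces `(s, t) ≤ z`, by the choice of `f` and the minimality of `t`.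
      have h1 : s ≤ z.1 := by
        by_contra! hlt
        exact hfw (hf (hA (by omega) hwA))
      have h2 : t ≤ z.2 := htmin _ ⟨w, hwN, hwB, hfw⟩
      have hvmem : v ∈ A z.1 ⊓ B z.2 := ⟨hA h1 (hs hvN), hB h2 hvB⟩
      have hd : w - (f w / f v) • v ∈ N ⊓ LinearMap.ker f ⊓ (A z.1 ⊓ B z.2) :=
        ⟨⟨N.sub_mem hwN (N.smul_mem _ hvN), by simp [hfv]⟩,
          Submodule.sub_mem _ ⟨hwA, hwB⟩ (Submodule.smul_mem _ _ hvmem)⟩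
      rw [← sub_add_cancel w ((f w / f v) • v)]
      exact Submodule.add_mem _ (hsub hd) (Submodule.smul_mem _ _
        (Submodule.subset_span ⟨0, by simpa using ⟨h1, h2⟩, by simp⟩))

/-- The sublevel coordinate filtration of an integer label function is monotone, and it is
eventually `⊥` and eventually `⊤`. -/
lemma coord_filtration (K : Type*) [Field K] {n : ℕ} (a : Fin n → ℤ) :
    let F : ℤ → Submodule K (Fin n → K) := fun s =>
      Submodule.span K {w : Fin n → K | ∃ k : Fin n, a k ≤ s ∧ w = Pi.single k 1}
    Monotone F ∧ (∃ s, F s = ⊥) ∧ (∃ s, F s = ⊤) := by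
  intro F
  obtain ⟨lo, hlo⟩ := (Set.finite_range a).bddBelow
  obtain ⟨hi, hhi⟩ := (Set.finite_range a).bddAbove
  refine ⟨fun s t hst => Submodule.span_mono ?_, ⟨lo - 1, ?_⟩, ⟨hi, ?_⟩⟩
  · rintro _ ⟨k, hk, rfl⟩
    exact ⟨k, hk.trans hst, rfl⟩
  · rw [eq_bot_iff]
    intro x hx
    rw [mem_span_single_iff] at hx
    rw [Submodule.mem_bot]
    ext k
    have := hlo ⟨k, rfl⟩
    exact hx k (by omega)
  · rw [eq_top_iff]
    intro x _
    rw [mem_span_single_iff]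
    exact fun k hk => absurd (hhi ⟨k, rfl⟩) hk

/-- The kernel of a morphism of finitely generated free 2-parameter persistence modules,
given in coordinates by a matrix `D` with column labels `g : Fin n → ℤ × ℤ`, is free:
there are finitely many pairs `(v_l, z_l)` such that, for every grade `z`, the vectors
`v_l` with `z_l ≤ z` form a basis of `ker D ∩ V_z`, where
`V_z = span{e_k : g_k ≤ z}`.  (Correctness of the algorithm `KerBasis`.) -/
theorem kernel_of_bigraded_morphism_is_free {K : Type*} [Field K] {m n : ℕ}
    (D : Matrix (Fin m) (Fin n) K) (g : Fin n → ℤ × ℤ) :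
    ∃ (r : ℕ) (v : Fin r → Fin n → K) (zl : Fin r → ℤ × ℤ),
      ∀ z : ℤ × ℤ,
        LinearIndependent K (fun l : {l : Fin r // zl l ≤ z} => v l.1) ∧
        Submodule.span K {w : Fin n → K | ∃ l : Fin r, zl l ≤ z ∧ w = v l}
          = LinearMap.ker D.mulVecLin ⊓
              Submodule.span K {w : Fin n → K | ∃ k : Fin n, g k ≤ z ∧ w = Pi.single k 1} := by
  obtain ⟨hA, hA0, hA1⟩ := coord_filtration K (fun k => (g k).1)
  obtain ⟨hB, hB0, hB1⟩ := coord_filtration K (fun k => (g k).2)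
  obtain ⟨r, v, zl, hv, hz⟩ :=
    exists_adapted_family _ _ hA hB hA0 hA1 hB0 hB1 (LinearMap.ker D.mulVecLin)
  refine ⟨r, v, zl, fun z => ⟨hv.comp _ Subtype.val_injective, ?_⟩⟩
  rw [hz]
  congr 1
  ext x
  rw [Submodule.mem_inf]
  simp only [mem_span_single_iff, Prod.le_def, not_and_or]
  exact ⟨fun h k hk => hk.elim (h.1 k) (h.2 k),
    fun h => ⟨fun k hk => h k (Or.inl hk), fun k hk => h k (Or.inr hk)⟩⟩
end

section
/- Let (P, h, c) be presentation data over a field K that is column-minimal (semi-minimal). Then for every z ∈ ℤ², m_z − rank D^z = dim M_z − dim( im(M_{z−e₁} → M_z) + im(M_{z−e₂} → M_z) ), where the maps M_{z'} → M_z are the structure maps induced by the inclusions W_{z'} ⊆ W_z. (First formula of the proposition computing the bigraded Betti number β₀ of the presented module from a semi-minimal presentation: β₀(z) = m_z − rank D^z.) -/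
/-!
Forgetting all coordinates except those of the rows with label `z` gives a linear map
`π : K^m → K^{m_z}`. It is surjective already on `W_z`, its kernel in `W_z` is
`W_{z-e₁} + W_{z-e₂}`, and it maps `C_z` onto the column space of `D^z`, because by the support
condition a column with label `< z` vanishes in the rows with label `z`. Hence `π` induces a
surjection `M_z → K^{m_z} / im D^z` (`gradeMap`) whose kernel is the sum of the images of the two
structure maps (`ker_gradeMap`), and the formula is rank-nullity for this surjection.
-/

/-- The grade-`z` piece `W_z = span{e_i : h_i ≤ z} ⊆ K^m` of the free module with
generators at grades `h_1, …, h_m`. -/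
def Wspace (K : Type*) [Field K] {m : ℕ} (h : Fin m → ℤ × ℤ) (z : ℤ × ℤ) :
    Submodule K (Fin m → K) :=
  Submodule.span K {v : Fin m → K | ∃ i : Fin m, h i ≤ z ∧ v = Pi.single i 1}

/-- The grade-`z` piece `C_z = span{P(*,j) : c_j ≤ z} ⊆ K^m` of the submodule generated
by the columns of `P` with labels `c_1, …, c_n`. -/
def Cspace {K : Type*} [Field K] {m n : ℕ} (P : Matrix (Fin m) (Fin n) K)
    (c : Fin n → ℤ × ℤ) (z : ℤ × ℤ) : Submodule K (Fin m → K) :=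
  Submodule.span K {v : Fin m → K | ∃ j : Fin n, c j ≤ z ∧ v = fun i => P i j}

theorem Wspace_mono (K : Type*) [Field K] {m : ℕ} (h : Fin m → ℤ × ℤ)
    {z' z : ℤ × ℤ} (hz : z' ≤ z) : Wspace K h z' ≤ Wspace K h z :=
  Submodule.span_mono fun v hv => by
    obtain ⟨i, hi, rfl⟩ := hv
    exact ⟨i, hi.trans hz, rfl⟩

theorem Cspace_mono {K : Type*} [Field K] {m n : ℕ} (P : Matrix (Fin m) (Fin n) K)
    (c : Fin n → ℤ × ℤ) {z' z : ℤ × ℤ} (hz : z' ≤ z) : Cspace P c z' ≤ Cspace P c z :=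
  Submodule.span_mono fun v hv => by
    obtain ⟨j, hj, rfl⟩ := hv
    exact ⟨j, hj.trans hz, rfl⟩

/-- The grade-`z` piece `M_z = W_z / C_z` of the module presented by the presentation
data `(P, h, c)`, realized as the image of `W_z` in `K^m ⧸ C_z`. -/
noncomputable def Mmod {K : Type*} [Field K] {m n : ℕ} (P : Matrix (Fin m) (Fin n) K)
    (h : Fin m → ℤ × ℤ) (c : Fin n → ℤ × ℤ) (z : ℤ × ℤ) :
    Submodule K ((Fin m → K) ⧸ Cspace P c z) :=
  (Wspace K h z).map (Cspace P c z).mkQ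

/-- The structure map `M_{z'} → M_z` induced by the inclusion `W_{z'} ⊆ W_z`. -/
noncomputable def structMap {K : Type*} [Field K] {m n : ℕ} (P : Matrix (Fin m) (Fin n) K)
    (h : Fin m → ℤ × ℤ) (c : Fin n → ℤ × ℤ) {z' z : ℤ × ℤ} (hz : z' ≤ z) :
    Mmod P h c z' →ₗ[K] Mmod P h c z :=
  LinearMap.restrict
    (Submodule.mapQ (Cspace P c z') (Cspace P c z) LinearMap.id
      (by simpa using Cspace_mono P c hz))
    (fun x hx => by
      obtain ⟨w, hw, rfl⟩ := hx
      exact ⟨w, Wspace_mono K h hz hw, by simp [Submodule.mapQ_apply]⟩)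

/-- The presentation data `(P, h, c)` is column-minimal (semi-minimal) if for every
grade `z` the columns of `P` with label `z` are linearly independent modulo the span of
the columns with label `≤ z` but `≠ z`. -/
def ColumnMinimal {K : Type*} [Field K] {m n : ℕ} (P : Matrix (Fin m) (Fin n) K)
    (c : Fin n → ℤ × ℤ) : Prop :=
  ∀ z : ℤ × ℤ, LinearIndependent K
    (fun j : {j : Fin n // c j = z} =>
      Submodule.Quotient.mk
        (p := Submodule.span K
          {v : Fin m → K | ∃ j' : Fin n, c j' ≤ z ∧ c j' ≠ z ∧ v = fun i => P i j'})
        (fun i => P i j.1))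

/-- The submatrix `D^z` of `P` on the rows with label `z` and columns with label `z`. -/
def Dsub {K : Type*} [Field K] {m n : ℕ} (P : Matrix (Fin m) (Fin n) K)
    (h : Fin m → ℤ × ℤ) (c : Fin n → ℤ × ℤ) (z : ℤ × ℤ) :
    Matrix {i : Fin m // h i = z} {j : Fin n // c j = z} K :=
  Matrix.of fun i j => P i.1 j.1


theorem sub_e1_le (z : ℤ × ℤ) : z - (1, 0) ≤ z := by
  rw [Prod.le_def]; constructor <;> simp [Prod.fst_sub, Prod.snd_sub]

theorem sub_e2_le (z : ℤ × ℤ) : z - (0, 1) ≤ z := by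
  rw [Prod.le_def]; constructor <;> simp [Prod.fst_sub, Prod.snd_sub]

theorem mem_Wspace_iff {K : Type*} [Field K] {m : ℕ} {h : Fin m → ℤ × ℤ} {z : ℤ × ℤ}
    {w : Fin m → K} : w ∈ Wspace K h z ↔ ∀ i, ¬ h i ≤ z → w i = 0 := by
  constructor
  · intro hw i hi
    have hle : Wspace K h z ≤ LinearMap.ker (LinearMap.proj (R := K) (φ := fun _ => K) i) := by
      refine Submodule.span_le.2 ?_
      rintro _ ⟨k, hk, rfl⟩
      have hik : i ≠ k := by
        rintro rfl
        exact hi hk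
      simp [hik]
    simpa using hle hw
  · intro hw
    rw [pi_eq_sum_univ' w]
    refine Submodule.sum_mem _ fun i _ => ?_
    by_cases hi : h i ≤ z
    · refine Submodule.smul_mem _ _ (Submodule.subset_span ⟨i, hi, ?_⟩)
      ext k
      simp [Pi.single_apply]
    · simp [hw i hi]

theorem Cspace_le_Wspace {K : Type*} [Field K] {m n : ℕ} {P : Matrix (Fin m) (Fin n) K}
    {h : Fin m → ℤ × ℤ} {c : Fin n → ℤ × ℤ}
    (hsupp : ∀ (i : Fin m) (j : Fin n), P i j ≠ 0 → h i ≤ c j) (z : ℤ × ℤ) :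
    Cspace P c z ≤ Wspace K h z := by
  refine Submodule.span_le.2 ?_
  rintro _ ⟨j, hj, rfl⟩
  refine mem_Wspace_iff.2 fun i hi => ?_
  by_contra hne
  exact hi ((hsupp i j hne).trans hj)

/-- The coordinate projection `K^m → K^{m_z}` onto the rows with label `z`. -/
def gradeProj (K : Type*) [Field K] {m : ℕ} (h : Fin m → ℤ × ℤ) (z : ℤ × ℤ) :
    (Fin m → K) →ₗ[K] ({i : Fin m // h i = z} → K) :=
  LinearMap.funLeft K K Subtype.val

theorem gradeProj_apply {K : Type*} [Field K] {m : ℕ} (h : Fin m → ℤ × ℤ) (z : ℤ × ℤ)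
    (w : Fin m → K) (i : {i : Fin m // h i = z}) : gradeProj K h z w i = w i.1 := rfl

/-- Columns with label `z` project to the columns of `D^z`, and columns with label `< z` project
to zero by the support condition. -/
theorem map_gradeProj_Cspace {K : Type*} [Field K] {m n : ℕ} {P : Matrix (Fin m) (Fin n) K}
    {h : Fin m → ℤ × ℤ} {c : Fin n → ℤ × ℤ}
    (hsupp : ∀ (i : Fin m) (j : Fin n), P i j ≠ 0 → h i ≤ c j) (z : ℤ × ℤ) :
    (Cspace P c z).map (gradeProj K h z) = LinearMap.range (Dsub P h c z).mulVecLin := by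
  rw [Matrix.range_mulVecLin]
  apply le_antisymm
  · rw [Submodule.map_le_iff_le_comap]
    refine Submodule.span_le.2 ?_
    rintro _ ⟨j, hj, rfl⟩
    by_cases hjz : c j = z
    · exact Submodule.subset_span ⟨⟨j, hjz⟩, rfl⟩
    · have h0 : gradeProj K h z (fun i => P i j) = 0 := by
        ext i
        rw [gradeProj_apply]
        by_contra hne
        exact hjz (le_antisymm hj (i.2 ▸ hsupp i.1 j hne))
      rw [SetLike.mem_coe, Submodule.mem_comap, h0]
      exact Submodule.zero_mem _
  · refine Submodule.span_le.2 ?_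
    rintro _ ⟨j, rfl⟩
    exact ⟨fun i => P i j.1, Submodule.subset_span ⟨j.1, j.2.le, rfl⟩, rfl⟩

/-- The map `M_z → K^{m_z} / im D^z` induced by `gradeProj`. -/
noncomputable def gradeMap {K : Type*} [Field K] {m n : ℕ} {P : Matrix (Fin m) (Fin n) K}
    {h : Fin m → ℤ × ℤ} {c : Fin n → ℤ × ℤ}
    (hsupp : ∀ (i : Fin m) (j : Fin n), P i j ≠ 0 → h i ≤ c j) (z : ℤ × ℤ) :
    Mmod P h c z →ₗ[K]
      ({i : Fin m // h i = z} → K) ⧸ LinearMap.range (Dsub P h c z).mulVecLin :=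
  (Submodule.mapQ (Cspace P c z) (LinearMap.range (Dsub P h c z).mulVecLin) (gradeProj K h z)
    (Submodule.map_le_iff_le_comap.1 (map_gradeProj_Cspace hsupp z).le)).domRestrict _

theorem gradeMap_mk {K : Type*} [Field K] {m n : ℕ} {P : Matrix (Fin m) (Fin n) K}
    {h : Fin m → ℤ × ℤ} {c : Fin n → ℤ × ℤ}
    (hsupp : ∀ (i : Fin m) (j : Fin n), P i j ≠ 0 → h i ≤ c j) (z : ℤ × ℤ)
    (w : Fin m → K) (hw : (Cspace P c z).mkQ w ∈ Mmod P h c z) :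
    gradeMap hsupp z ⟨(Cspace P c z).mkQ w, hw⟩
      = Submodule.Quotient.mk (gradeProj K h z w) := rfl

theorem gradeMap_surjective {K : Type*} [Field K] {m n : ℕ} {P : Matrix (Fin m) (Fin n) K}
    {h : Fin m → ℤ × ℤ} {c : Fin n → ℤ × ℤ}
    (hsupp : ∀ (i : Fin m) (j : Fin n), P i j ≠ 0 → h i ≤ c j) (z : ℤ × ℤ) :
    Function.Surjective (gradeMap hsupp z) := by
  intro y
  obtain ⟨v, rfl⟩ := Submodule.Quotient.mk_surjective _ y
  -- extension of `v` by zero to all rows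
  let w : Fin m → K := fun i => if hi : h i = z then v ⟨i, hi⟩ else 0
  have hw : w ∈ Wspace K h z :=
    mem_Wspace_iff.2 fun i hi => dif_neg fun hiz => hi hiz.le
  have hmem : (Cspace P c z).mkQ w ∈ Mmod P h c z := ⟨w, hw, rfl⟩
  refine ⟨⟨(Cspace P c z).mkQ w, hmem⟩, ?_⟩
  rw [gradeMap_mk]
  congr 1
  ext i
  rw [gradeProj_apply]
  exact dif_pos i.2

theorem mem_range_structMap {K : Type*} [Field K] {m n : ℕ} (P : Matrix (Fin m) (Fin n) K)
    (h : Fin m → ℤ × ℤ) (c : Fin n → ℤ × ℤ) {z' z : ℤ × ℤ} (hz : z' ≤ z)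
    (x : Mmod P h c z) :
    x ∈ LinearMap.range (structMap P h c hz)
      ↔ ∃ w ∈ Wspace K h z', (Cspace P c z).mkQ w = x := by
  constructor
  · rintro ⟨⟨_, w, hw, rfl⟩, rfl⟩
    exact ⟨w, hw, rfl⟩
  · rintro ⟨w, hw, hx⟩
    exact ⟨⟨(Cspace P c z').mkQ w, w, hw, rfl⟩, Subtype.ext hx⟩

/-- A grade strictly below `z` in `ℤ²` is below `z - e₁` or `z - e₂`. -/
theorem le_sub_e1_or_le_sub_e2 {a z : ℤ × ℤ} (hle : a ≤ z) (hne : a ≠ z) :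
    a ≤ z - (1, 0) ∨ a ≤ z - (0, 1) := by
  obtain ⟨a₁, a₂⟩ := a
  obtain ⟨z₁, z₂⟩ := z
  simp only [Prod.mk_le_mk, ne_eq, Prod.mk.injEq, Prod.mk_sub_mk] at *
  omega

theorem range_structMap_le_ker {K : Type*} [Field K] {m n : ℕ} {P : Matrix (Fin m) (Fin n) K}
    {h : Fin m → ℤ × ℤ} {c : Fin n → ℤ × ℤ}
    (hsupp : ∀ (i : Fin m) (j : Fin n), P i j ≠ 0 → h i ≤ c j) {z' z : ℤ × ℤ} (hz : z' ≤ z)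
    (hlt : ¬ z ≤ z') :
    LinearMap.range (structMap P h c hz) ≤ LinearMap.ker (gradeMap hsupp z) := by
  rintro ⟨x, hx⟩ hmem
  obtain ⟨w, hw, rfl⟩ := (mem_range_structMap P h c hz _).1 hmem
  rw [LinearMap.mem_ker, gradeMap_mk]
  have h0 : gradeProj K h z w = 0 := by
    ext i
    exact mem_Wspace_iff.1 hw i.1 (by rwa [i.2])
  rw [h0, Submodule.Quotient.mk_zero]

theorem ker_gradeMap {K : Type*} [Field K] {m n : ℕ} {P : Matrix (Fin m) (Fin n) K}
    {h : Fin m → ℤ × ℤ} {c : Fin n → ℤ × ℤ}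
    (hsupp : ∀ (i : Fin m) (j : Fin n), P i j ≠ 0 → h i ≤ c j) (z : ℤ × ℤ) :
    LinearMap.ker (gradeMap hsupp z)
      = LinearMap.range (structMap P h c (sub_e1_le z))
        ⊔ LinearMap.range (structMap P h c (sub_e2_le z)) := by
  apply le_antisymm
  · rintro ⟨x, hx⟩ hker
    obtain ⟨w, hw, rfl⟩ := Submodule.mem_map.1 hx
    rw [LinearMap.mem_ker, gradeMap_mk, Submodule.Quotient.mk_eq_zero,
      ← map_gradeProj_Cspace hsupp z] at hker
    obtain ⟨u, hu, huw⟩ := hker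
    -- `w - u` represents the same class as `w` and vanishes in the rows with label `z`
    have hd : ∀ i, ¬ (h i ≤ z ∧ h i ≠ z) → (w - u) i = 0 := by
      intro i hi
      by_cases hiz : h i = z
      · have := congrFun huw ⟨i, hiz⟩
        rw [gradeProj_apply, gradeProj_apply] at this
        simp [this]
      · exact mem_Wspace_iff.1 (Submodule.sub_mem _ hw (Cspace_le_Wspace hsupp z hu)) i
          fun hle => hi ⟨hle, hiz⟩
    classical
    let a : Fin m → K := fun i => if h i ≤ z - (1, 0) then (w - u) i else 0
    have ha : a ∈ Wspace K h (z - (1, 0)) := mem_Wspace_iff.2 fun i hi => if_neg hi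
    have hb : w - u - a ∈ Wspace K h (z - (0, 1)) := by
      refine mem_Wspace_iff.2 fun i hi => ?_
      by_cases hi1 : h i ≤ z - (1, 0)
      · simp [a, hi1]
      · have h0 := hd i fun hlt => (le_sub_e1_or_le_sub_e2 hlt.1 hlt.2).elim hi1 hi
        simp only [Pi.sub_apply] at h0 ⊢
        simp [a, hi1, h0]
    refine Submodule.mem_sup.2
      ⟨⟨(Cspace P c z).mkQ a, a, Wspace_mono K h (sub_e1_le z) ha, rfl⟩,
        (mem_range_structMap P h c _ _).2 ⟨a, ha, rfl⟩,
        ⟨(Cspace P c z).mkQ (w - u - a), _, Wspace_mono K h (sub_e2_le z) hb, rfl⟩,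
        (mem_range_structMap P h c _ _).2 ⟨_, hb, rfl⟩, Subtype.ext ?_⟩
    have hu0 : (Cspace P c z).mkQ u = 0 := by simpa using hu
    change (Cspace P c z).mkQ a + (Cspace P c z).mkQ (w - u - a) = (Cspace P c z).mkQ w
    rw [map_sub, map_sub, hu0]
    abel
  · refine sup_le (range_structMap_le_ker hsupp _ ?_) (range_structMap_le_ker hsupp _ ?_)
    · simp [Prod.le_def]
    · simp [Prod.le_def]

/-- For a column-minimal (semi-minimal) presentation `(P, h, c)` of a bipersistence
module `M`, the 0-th bigraded Betti number of `M` at `z` is `m_z − rank D^z`: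
`m_z − rank D^z = dim M_z − dim(im(M_{z−e₁} → M_z) + im(M_{z−e₂} → M_z))`. -/
theorem betti0_from_semiminimal_presentation {K : Type*} [Field K] {m n : ℕ}
    (P : Matrix (Fin m) (Fin n) K) (h : Fin m → ℤ × ℤ) (c : Fin n → ℤ × ℤ)
    (hsupp : ∀ (i : Fin m) (j : Fin n), P i j ≠ 0 → h i ≤ c j)
    (hmin : ColumnMinimal P c) :
    ∀ z : ℤ × ℤ,
      Nat.card {i : Fin m // h i = z} - (Dsub P h c z).rank
        = Module.finrank K ↥(Mmod P h c z)
          - Module.finrank K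
              ↥(LinearMap.range (structMap P h c (sub_e1_le z))
                ⊔ LinearMap.range (structMap P h c (sub_e2_le z))) := by
  intro z
  have h1 := (gradeMap hsupp z).finrank_range_add_finrank_ker
  rw [LinearMap.range_eq_top.2 (gradeMap_surjective hsupp z), finrank_top,
    ker_gradeMap hsupp z] at h1
  have h2 := Submodule.finrank_quotient_add_finrank (LinearMap.range (Dsub P h c z).mulVecLin)
  rw [Module.finrank_fintype_fun_eq_card, ← Nat.card_eq_fintype_card] at h2
  have h3 : (Dsub P h c z).rank
      = Module.finrank K (LinearMap.range (Dsub P h c z).mulVecLin) := rfl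
  omega
end
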